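/- Let K(x) := 1/(π(1+x²)) and ξ(x) := 2/(π(1+4x²)). For every q ∈ [0,∞), the linear integral equation g(λ) + ∫_{−q}^{q} K(λ−μ)g(μ)dμ = ξ(λ) for all λ ∈ ℝ has a unique solution g = ρ(·|q) in L¹(ℝ)∩L^∞(ℝ). Moreover, for every m ∈ [0,1/2) there exists q ∈ [0,∞) with ∫_{−q}^{q} ρ(λ|q)dλ = m. -/

import Mathlib

open MeasureTheory Filter
open scoped Real BigOperators

noncomputable section

namespace BetheSix

/-- the kernel `K(x) = 1/(π(1+x²))` at `Δ = -1`. -/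
def Kxxx (x : ℝ) : ℝ := 1 / (π * (1 + x ^ 2))

/-- the kernel `ξ(x) = 2/(π(1+4x²))` at `Δ = -1`. -/
def xiXXX (x : ℝ) : ℝ := 2 / (π * (1 + 4 * x ^ 2))

/-- `g` is the solution `ρ(·|q)` of the continuum Bethe equation at `Δ = -1`:
`g ∈ L¹(ℝ) ∩ L^∞(ℝ)` and `g(λ) + ∫_{-q}^q K(λ-μ) g(μ) dμ = ξ(λ)`. -/
def IsBExxx (q : ℝ) (g : ℝ → ℝ) : Prop :=
  Integrable g ∧ MemLp g ⊤ ∧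
    ∀ l : ℝ, g l + ∫ m in (-q)..q, Kxxx (l - m) * g m = xiXXX l

/-! Basic facts on the kernels -/

lemma K_cont : Continuous Kxxx := by
  unfold Kxxx
  refine continuous_const.div (by fun_prop) (fun x => ?_)
  have := Real.pi_pos
  positivity

lemma K_nonneg (x : ℝ) : 0 ≤ Kxxx x := by
  unfold Kxxx
  have := Real.pi_pos
  positivity

lemma K_le_one (x : ℝ) : Kxxx x ≤ 1 := by
  unfold Kxxx
  have := Real.pi_gt_three
  rw [div_le_one (by positivity)]
  nlinarith [sq_nonneg x]

lemma K_even (x y : ℝ) : Kxxx (x - y) = Kxxx (y - x) := by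
  unfold Kxxx
  congr 2
  ring

lemma K_eq : Kxxx = fun x => π⁻¹ * (1 + x ^ 2)⁻¹ := by
  funext x
  unfold Kxxx
  rw [one_div, mul_inv]

lemma K_int : Integrable Kxxx := by
  rw [K_eq]
  exact integrable_inv_one_add_sq.const_mul _

lemma K_integral : ∫ x, Kxxx x = 1 := by
  rw [K_eq, integral_const_mul, integral_univ_inv_one_add_sq]
  exact inv_mul_cancel₀ Real.pi_pos.ne'

def PP (t x : ℝ) : ℝ := t / (π * (x ^ 2 + t ^ 2))

lemma PP_eq (t : ℝ) (ht : 0 < t) : PP t = fun x => t⁻¹ * Kxxx (t⁻¹ * x) := by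
  funext x
  unfold PP Kxxx
  have := Real.pi_pos
  field_simp
  ring

lemma PP_cont (t : ℝ) (ht : 0 < t) : Continuous (PP t) := by
  rw [PP_eq t ht]
  exact continuous_const.mul (K_cont.comp (by fun_prop))

lemma PP_nonneg (t : ℝ) (ht : 0 < t) (x : ℝ) : 0 ≤ PP t x := by
  rw [PP_eq t ht]
  exact mul_nonneg (by positivity) (K_nonneg _)

lemma PP_int (t : ℝ) (ht : 0 < t) : Integrable (PP t) := by
  rw [PP_eq t ht]
  exact (K_int.comp_mul_left' (by positivity)).const_mul _

lemma PP_integral (t : ℝ) (ht : 0 < t) : ∫ x, PP t x = 1 := by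
  rw [PP_eq t ht, integral_const_mul, Measure.integral_comp_mul_left, K_integral, inv_inv,
    abs_of_pos ht]
  simp [ht.ne']

lemma xi_eq : xiXXX = PP (1 / 2) := by
  funext x
  unfold xiXXX PP
  have := Real.pi_pos
  field_simp
  ring

lemma xi_cont : Continuous xiXXX := xi_eq ▸ PP_cont _ (by norm_num)
lemma xi_int : Integrable xiXXX := xi_eq ▸ PP_int _ (by norm_num)
lemma xi_nonneg (x : ℝ) : 0 ≤ xiXXX x := by
  rw [xi_eq]; exact PP_nonneg _ (by norm_num) x
lemma xi_le (x : ℝ) : xiXXX x ≤ 1 := by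
  unfold xiXXX
  have := Real.pi_gt_three
  rw [div_le_one (by positivity)]
  nlinarith [sq_nonneg x]

lemma log_ratio_tendsto (x t : ℝ) (ht : 0 < t) (L : Filter ℝ) (hL : Tendsto (fun m : ℝ => m⁻¹) L (nhds 0))
    (hL2 : ∀ᶠ m in L, m ≠ 0) :
    Tendsto (fun m : ℝ => Real.log ((m - x) ^ 2 + 1) - Real.log (m ^ 2 + t ^ 2)) L (nhds 0) := by
  have h1 : Tendsto (fun m : ℝ => Real.log (((1 - x * m⁻¹) ^ 2 + m⁻¹ ^ 2) / (1 + t ^ 2 * m⁻¹ ^ 2)))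
      L (nhds (Real.log (((1 - x * 0) ^ 2 + 0 ^ 2) / (1 + t ^ 2 * 0 ^ 2)))) := by
    refine Tendsto.log ?_ (by norm_num)
    refine Tendsto.div ?_ ?_ (by norm_num)
    · exact ((tendsto_const_nhds.sub (tendsto_const_nhds.mul hL)).pow 2).add (hL.pow 2)
    · exact tendsto_const_nhds.add (tendsto_const_nhds.mul (hL.pow 2))
  norm_num at h1
  refine h1.congr' ?_
  filter_upwards [hL2] with m hm
  rw [← Real.log_div (by positivity) (by positivity)]
  congr 1
  field_simp

lemma K_conv_PP (t : ℝ) (ht : 0 < t) (ht1 : t ≠ 1) (x : ℝ) :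
    ∫ m, Kxxx (x - m) * PP t m = PP (t + 1) x := by
  have hpi := Real.pi_pos
  set D : ℝ := (x ^ 2 + (t - 1) ^ 2) * (x ^ 2 + (t + 1) ^ 2) with hD
  have hDpos : 0 < D := by
    have : 0 < (t - 1) ^ 2 := by
      have : t - 1 ≠ 0 := sub_ne_zero.mpr ht1
      positivity
    positivity
  have hD' : D = (x ^ 2 + t ^ 2 - 1) ^ 2 + 4 * x ^ 2 := by rw [hD]; ring
  set al : ℝ := -2 * x / D with hal
  set be : ℝ := (x ^ 2 + t ^ 2 - 1) / D with hbe
  set ga : ℝ := (x ^ 2 + 1 - t ^ 2) / D with hga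
  let f : ℝ → ℝ := fun m => (t / π ^ 2) * (al / 2 * (Real.log ((m - x) ^ 2 + 1) - Real.log (m ^ 2 + t ^ 2))
    + be * Real.arctan (m - x) + ga / t * Real.arctan (m / t))
  have hder : ∀ m, HasDerivAt f (Kxxx (x - m) * PP t m) m := by
    intro m
    have p1 : 0 < (m - x) ^ 2 + 1 := by positivity
    have p2 : 0 < m ^ 2 + t ^ 2 := by positivity
    have d1 : HasDerivAt (fun m : ℝ => Real.log ((m - x) ^ 2 + 1)) ((2 * (m - x)) / ((m - x) ^ 2 + 1)) m := by
      have := ((((hasDerivAt_id m).sub_const x).pow 2).add_const 1).log p1.ne'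
      simpa using this
    have d2 : HasDerivAt (fun m : ℝ => Real.log (m ^ 2 + t ^ 2)) ((2 * m) / (m ^ 2 + t ^ 2)) m := by
      have := (((hasDerivAt_id m).pow 2).add_const (t ^ 2)).log p2.ne'
      simpa using this
    have d3 : HasDerivAt (fun m : ℝ => Real.arctan (m - x)) (1 / (1 + (m - x) ^ 2)) m := by
      have := ((hasDerivAt_id m).sub_const x).arctan
      simpa using this
    have d4 : HasDerivAt (fun m : ℝ => Real.arctan (m / t)) (1 / (1 + (m / t) ^ 2) * (1 / t)) m := by
      have := ((hasDerivAt_id m).div_const t).arctan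
      simpa using this
    have := ((((d1.sub d2).const_mul (al / 2)).add (d3.const_mul be)).add
      (d4.const_mul (ga / t))).const_mul (t / π ^ 2)
    refine HasDerivAt.congr_deriv (f := f) this (Eq.symm ?_)
    have e4 : 1 / (1 + (m / t) ^ 2) * (1 / t) = t / (m ^ 2 + t ^ 2) := by
      field_simp
      ring
    rw [e4]
    have key : 1 / (((m - x) ^ 2 + 1) * (m ^ 2 + t ^ 2)) = (al * (m - x) + be) / ((m - x) ^ 2 + 1)
        + (-al * m + ga) / (m ^ 2 + t ^ 2) := by
      rw [div_add_div _ _ p1.ne' p2.ne']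
      congr 1
      rw [hal, hbe, hga]
      field_simp
      rw [hD']
      ring
    have l1 : Kxxx (x - m) * PP t m = t / π ^ 2 * (1 / (((m - x) ^ 2 + 1) * (m ^ 2 + t ^ 2))) := by
      rw [K_even]
      unfold Kxxx PP
      field_simp
      ring
    rw [l1, key]
    congr 1
    have e5 : 1 + (m - x) ^ 2 = (m - x) ^ 2 + 1 := by ring
    rw [e5]
    field_simp
    ring
  have hint : Integrable fun m => Kxxx (x - m) * PP t m := by
    refine (PP_int t ht).bdd_mul (c := 1) ?_ ?_
    · exact (K_cont.comp (by fun_prop)).aestronglyMeasurable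
    · filter_upwards with m
      rw [Real.norm_of_nonneg (K_nonneg _)]
      exact K_le_one _
  have hT : Tendsto f atTop (nhds ((t / π ^ 2) * (al / 2 * 0 + be * (π / 2) + ga / t * (π / 2)))) := by
    refine tendsto_const_nhds.mul (((tendsto_const_nhds.mul ?_).add (tendsto_const_nhds.mul ?_)).add
      (tendsto_const_nhds.mul ?_))
    · exact log_ratio_tendsto x t ht _ tendsto_inv_atTop_zero (eventually_ne_atTop 0)
    · exact (Real.tendsto_arctan_atTop.mono_right nhdsWithin_le_nhds).comp
        (tendsto_atTop_add_const_right _ (-x) tendsto_id)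
    · exact (Real.tendsto_arctan_atTop.mono_right nhdsWithin_le_nhds).comp
        (tendsto_id.atTop_div_const ht)
  have hB : Tendsto f atBot (nhds ((t / π ^ 2) * (al / 2 * 0 + be * (-(π / 2)) + ga / t * (-(π / 2))))) := by
    refine tendsto_const_nhds.mul (((tendsto_const_nhds.mul ?_).add (tendsto_const_nhds.mul ?_)).add
      (tendsto_const_nhds.mul ?_))
    · exact log_ratio_tendsto x t ht _ tendsto_inv_atBot_zero (eventually_ne_atBot 0)
    · exact (Real.tendsto_arctan_atBot.mono_right nhdsWithin_le_nhds).comp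
        (tendsto_atBot_add_const_right _ (-x) tendsto_id)
    · exact (Real.tendsto_arctan_atBot.mono_right nhdsWithin_le_nhds).comp
        (tendsto_id.atBot_div_const ht)
  rw [integral_of_hasDerivAt_of_tendsto hder hint hB hT]
  have h1 : t * be + ga = (t + 1) / (x ^ 2 + (t + 1) ^ 2) := by
    rw [hbe, hga]
    have : 0 < x ^ 2 + (t + 1) ^ 2 := by positivity
    rw [← mul_div_assoc, ← add_div, div_eq_div_iff hDpos.ne' this.ne', hD]
    ring
  unfold PP
  have h2 : (t + 1) / (π * (x ^ 2 + (t + 1) ^ 2)) = (t * be + ga) / π := by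
    rw [h1]
    field_simp
  rw [h2]
  field_simp
  ring

lemma PP_diff_le (t : ℝ) (ht : 0 < t) (x : ℝ) : |PP t x - PP (t + 1) x| ≤ t⁻¹ * PP t x := by
  have hpi := Real.pi_pos
  have e : PP t x - PP (t + 1) x =
      π⁻¹ * (t * (t + 1) - x ^ 2) / ((x ^ 2 + t ^ 2) * (x ^ 2 + (t + 1) ^ 2)) := by
    unfold PP
    field_simp
    ring
  have e2 : t⁻¹ * PP t x = π⁻¹ * (x ^ 2 + (t + 1) ^ 2) / ((x ^ 2 + t ^ 2) * (x ^ 2 + (t + 1) ^ 2)) := by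
    unfold PP
    field_simp
  rw [e, e2, abs_div, abs_mul, abs_of_pos (inv_pos.mpr hpi),
    abs_of_pos (by positivity : 0 < (x ^ 2 + t ^ 2) * (x ^ 2 + (t + 1) ^ 2))]
  gcongr
  rw [abs_le]
  constructor <;> nlinarith [sq_nonneg x]

/-! The truncated operator and the contraction argument -/

/-- the symmetric interval -/
def SS (q : ℝ) : Set ℝ := Set.Ioc (-q) q

lemma SS_meas (q : ℝ) : MeasurableSet (SS q) := measurableSet_Ioc

lemma ii_eq (q : ℝ) (hq : 0 ≤ q) (f : ℝ → ℝ) : ∫ m in (-q)..q, f m = ∫ m in SS q, f m :=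
  intervalIntegral.integral_of_le (by linarith)

/-- contraction constant -/
def cc (q : ℝ) : ℝ := Real.arctan q / π + 1 / 2

lemma cc_lt (q : ℝ) : cc q < 1 := by
  unfold cc
  have h := Real.arctan_lt_pi_div_two q
  have : Real.arctan q / π < 1 / 2 := by
    rw [div_lt_iff₀ Real.pi_pos]
    linarith
  linarith

lemma cc_nonneg (q : ℝ) (hq : 0 ≤ q) : 0 ≤ cc q := by
  unfold cc
  have h := Real.arctan_nonneg.mpr hq
  have := Real.pi_pos
  positivity

lemma cc_mono {p q : ℝ} (h : p ≤ q) : cc p ≤ cc q := by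
  unfold cc
  have := Real.arctan_mono h
  have := Real.pi_pos
  gcongr

lemma K_shift_int (l : ℝ) : Integrable fun m => Kxxx (l - m) := K_int.comp_sub_left l

lemma KS_le (q : ℝ) (hq : 0 ≤ q) (l : ℝ) : ∫ m in SS q, Kxxx (l - m) ≤ cc q := by
  have hpi := Real.pi_pos
  rw [← ii_eq q hq, intervalIntegral.integral_comp_sub_left (fun x => Kxxx x), K_eq,
    intervalIntegral.integral_const_mul, integral_inv_one_add_sq]
  have e : cc q = π⁻¹ * (Real.arctan q + π / 2) := by
    unfold cc
    field_simp
  rw [e]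
  refine mul_le_mul_of_nonneg_left ?_ (by positivity)
  rcases le_total 0 l with h | h
  · have h1 := Real.arctan_lt_pi_div_two (l - -q)
    have h2 : Real.arctan (-q) ≤ Real.arctan (l - q) := Real.arctan_mono (by linarith)
    rw [Real.arctan_neg] at h2
    linarith
  · have h1 := Real.neg_pi_div_two_lt_arctan (l - q)
    have h2 : Real.arctan (l - -q) ≤ Real.arctan q := Real.arctan_mono (by linarith)
    linarith

lemma KS_nonneg (q : ℝ) (l : ℝ) : 0 ≤ ∫ m in SS q, Kxxx (l - m) :=
  integral_nonneg fun _ => K_nonneg _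

lemma Kmul_int (l : ℝ) {f : ℝ → ℝ} (hf : Integrable f) : Integrable fun m => Kxxx (l - m) * f m := by
  refine hf.bdd_mul (c := 1) ?_ ?_
  · exact (K_cont.comp (by fun_prop)).aestronglyMeasurable
  · filter_upwards with m
    rw [Real.norm_of_nonneg (K_nonneg _)]
    exact K_le_one _

lemma Kmul_intOn (q l : ℝ) {f : ℝ → ℝ} (hf : IntegrableOn f (SS q)) :
    IntegrableOn (fun m => Kxxx (l - m) * f m) (SS q) := by
  refine Integrable.bdd_mul (c := 1) hf ?_ ?_
  · exact (K_cont.comp (by fun_prop)).aestronglyMeasurable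
  · filter_upwards with m
    rw [Real.norm_of_nonneg (K_nonneg _)]
    exact K_le_one _

lemma cont_intOn (q : ℝ) {f : ℝ → ℝ} (hf : Continuous f) : IntegrableOn f (SS q) :=
  (hf.integrableOn_Icc (a := -q) (b := q)).mono_set Set.Ioc_subset_Icc_self

lemma Kop_bound (q l C : ℝ) {f : ℝ → ℝ} (hf : ∀ᵐ m, |f m| ≤ C) :
    |∫ m in SS q, Kxxx (l - m) * f m| ≤ (∫ m in SS q, Kxxx (l - m)) * C := by
  rw [← integral_mul_const, ← Real.norm_eq_abs]
  refine norm_integral_le_of_norm_le ((K_shift_int l).integrableOn.mul_const C) ?_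
  filter_upwards [ae_restrict_of_ae hf] with m hm
  rw [norm_mul, Real.norm_of_nonneg (K_nonneg _), Real.norm_eq_abs]
  exact mul_le_mul_of_nonneg_left hm (K_nonneg _)

lemma Kop_cont (q : ℝ) {f : ℝ → ℝ} (hf : IntegrableOn f (SS q)) :
    Continuous fun l => ∫ m in SS q, Kxxx (l - m) * f m := by
  refine continuous_of_dominated (bound := fun m => ‖f m‖) (fun l => ?_) (fun l => ?_) hf.norm ?_
  · exact (Kmul_intOn q l hf).aestronglyMeasurable
  · filter_upwards with m
    rw [norm_mul, Real.norm_of_nonneg (K_nonneg _)]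
    exact mul_le_of_le_one_left (norm_nonneg _) (K_le_one _)
  · filter_upwards with m
    exact (K_cont.comp (by fun_prop)).mul continuous_const

open BoundedContinuousFunction in
/-- the operator on bounded continuous functions -/
def Kop (q : ℝ) (hq : 0 ≤ q) (f : ℝ →ᵇ ℝ) : ℝ →ᵇ ℝ :=
  BoundedContinuousFunction.ofNormedAddCommGroup (fun l => ∫ m in SS q, Kxxx (l - m) * f m)
    (Kop_cont q (cont_intOn q f.continuous)) (cc q * ‖f‖) (fun l => by
      rw [Real.norm_eq_abs]
      refine (Kop_bound q l ‖f‖ (Eventually.of_forall fun m => f.norm_coe_le_norm m)).trans ?_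
      exact mul_le_mul_of_nonneg_right (KS_le q hq l) (norm_nonneg _))

open BoundedContinuousFunction in
lemma Kop_apply (q : ℝ) (hq : 0 ≤ q) (f : ℝ →ᵇ ℝ) (l : ℝ) :
    Kop q hq f l = ∫ m in SS q, Kxxx (l - m) * f m := rfl

open BoundedContinuousFunction in
lemma Kop_norm (q : ℝ) (hq : 0 ≤ q) (f : ℝ →ᵇ ℝ) : ‖Kop q hq f‖ ≤ cc q * ‖f‖ := by
  refine (BoundedContinuousFunction.norm_le (mul_nonneg (cc_nonneg q hq) (norm_nonneg _))).mpr
    fun l => ?_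
  rw [Kop_apply, Real.norm_eq_abs]
  refine (Kop_bound q l ‖f‖ (Eventually.of_forall fun m => f.norm_coe_le_norm m)).trans ?_
  exact mul_le_mul_of_nonneg_right (KS_le q hq l) (norm_nonneg _)

open BoundedContinuousFunction in
lemma Kop_sub (q : ℝ) (hq : 0 ≤ q) (f g : ℝ →ᵇ ℝ) : Kop q hq (f - g) = Kop q hq f - Kop q hq g := by
  ext l
  rw [BoundedContinuousFunction.sub_apply, Kop_apply, Kop_apply, Kop_apply,
    ← integral_sub (Kmul_intOn q l (cont_intOn q f.continuous))
      (Kmul_intOn q l (cont_intOn q g.continuous))]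
  congr 1
  funext m
  rw [BoundedContinuousFunction.sub_apply]
  ring

open BoundedContinuousFunction in
lemma exists_sol (q : ℝ) (hq : 0 ≤ q) (f : ℝ →ᵇ ℝ) : ∃ g : ℝ →ᵇ ℝ, g + Kop q hq g = f := by
  have hc : ContractingWith ⟨cc q, cc_nonneg q hq⟩ (fun g : ℝ →ᵇ ℝ => f - Kop q hq g) := by
    refine ⟨by exact_mod_cast cc_lt q, LipschitzWith.of_dist_le_mul fun x y => ?_⟩
    rw [dist_eq_norm, dist_eq_norm]
    have : f - Kop q hq x - (f - Kop q hq y) = Kop q hq (y - x) := by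
      rw [Kop_sub]
      abel
    rw [this, norm_sub_rev x y]
    exact Kop_norm q hq _
  refine ⟨hc.fixedPoint, ?_⟩
  have h : f - Kop q hq hc.fixedPoint = hc.fixedPoint := hc.fixedPoint_isFixedPt
  nth_rewrite 1 [← h]
  abel

open BoundedContinuousFunction in
lemma sol_norm (q : ℝ) (hq : 0 ≤ q) (g f : ℝ →ᵇ ℝ) (h : g + Kop q hq g = f) :
    ‖g‖ ≤ ‖f‖ / (1 - cc q) := by
  have h0 := cc_lt q
  rw [le_div_iff₀ (by linarith)]
  have h1 : g = f - Kop q hq g := by rw [← h]; abel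
  have h2 : ‖g‖ ≤ ‖f‖ + ‖Kop q hq g‖ := by
    calc ‖g‖ = ‖f - Kop q hq g‖ := by rw [← h1]
      _ ≤ _ := norm_sub_le _ _
  have := Kop_norm q hq g
  linarith

open BoundedContinuousFunction in
/-- the source term as a bounded continuous function -/
def xiB : ℝ →ᵇ ℝ := BoundedContinuousFunction.ofNormedAddCommGroup xiXXX xi_cont 1 (fun x => by
  rw [Real.norm_of_nonneg (xi_nonneg x)]; exact xi_le x)

lemma xiB_norm : ‖xiB‖ ≤ 1 := by
  refine (BoundedContinuousFunction.norm_le zero_le_one).mpr fun x => ?_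
  change ‖xiXXX x‖ ≤ 1
  rw [Real.norm_of_nonneg (xi_nonneg x)]; exact xi_le x

open BoundedContinuousFunction in
lemma sol_unique (q : ℝ) (hq : 0 ≤ q) (g g' f : ℝ →ᵇ ℝ) (h : g + Kop q hq g = f)
    (h' : g' + Kop q hq g' = f) : g = g' := by
  have : (g - g') + Kop q hq (g - g') = 0 := by
    rw [Kop_sub]
    calc _ = (g + Kop q hq g) - (g' + Kop q hq g') := by abel
      _ = 0 := by rw [h, h', sub_self]
  have h2 := sol_norm q hq _ _ this
  rw [norm_zero, zero_div] at h2
  exact sub_eq_zero.mp (norm_le_zero_iff.mp h2)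

open BoundedContinuousFunction in
lemma isBE_to (q : ℝ) (hq : 0 ≤ q) (g : ℝ → ℝ) (hg : IsBExxx q g) :
    ∃ G : ℝ →ᵇ ℝ, ⇑G = g ∧ G + Kop q hq G = xiB := by
  obtain ⟨h1, h2, h3⟩ := hg
  simp only [ii_eq q hq] at h3
  have hg : g = fun l => xiXXX l - ∫ m in SS q, Kxxx (l - m) * g m := by
    funext l
    linarith [h3 l]
  have hcont : Continuous g := by
    rw [hg]
    exact xi_cont.sub (Kop_cont q h1.integrableOn)
  obtain ⟨C, hC⟩ : ∃ C, ∀ᵐ m, |g m| ≤ C := by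
    have := h2.eLpNorm_lt_top
    rw [eLpNorm_exponent_top] at this
    refine ⟨(eLpNormEssSup g volume).toReal, ?_⟩
    filter_upwards [enorm_ae_le_eLpNormEssSup g volume] with m hm
    have := ENNReal.toReal_mono this.ne hm
    simpa using this
  have hb : ∀ l, ‖g l‖ ≤ 1 + (∫ m, Kxxx m) * |C| := by
    intro l
    have e : g l = xiXXX l - ∫ m in SS q, Kxxx (l - m) * g m := by linarith [h3 l]
    rw [e]
    refine (norm_sub_le _ _).trans (add_le_add ?_ ?_)
    · rw [Real.norm_of_nonneg (xi_nonneg l)]; exact xi_le l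
    · rw [Real.norm_eq_abs]
      refine (Kop_bound q l |C| (hC.mono fun m hm => hm.trans (le_abs_self C))).trans ?_
      refine mul_le_mul_of_nonneg_right ?_ (abs_nonneg _)
      rw [K_integral]
      exact (KS_le q hq l).trans (cc_lt q).le
  refine ⟨BoundedContinuousFunction.ofNormedAddCommGroup g hcont _ hb, rfl, ?_⟩
  ext l
  exact h3 l

/-- Fubini for the kernel. -/
lemma conv_prod_int {f : ℝ → ℝ} (hf : Integrable f) :
    Integrable (fun p : ℝ × ℝ => Kxxx (p.1 - p.2) * f p.2) (volume.prod volume) := by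
  have := hf.convolution_integrand (ContinuousLinearMap.mul ℝ ℝ) K_int (μ := volume)
  refine this.congr (Eventually.of_forall fun p => ?_)
  simp [mul_comm]

lemma conv_int {f : ℝ → ℝ} (hf : Integrable f) : Integrable (fun l => ∫ m, Kxxx (l - m) * f m) :=
  (conv_prod_int hf).integral_prod_left

lemma conv_L1 (A : Set ℝ) {f : ℝ → ℝ} (hf : Integrable f) :
    ∫ l in A, |∫ m, Kxxx (l - m) * f m| ≤ ∫ m, |f m| := by
  have hfa : Integrable (fun m => |f m|) := hf.abs
  calc ∫ l in A, |∫ m, Kxxx (l - m) * f m| ≤ ∫ l, |∫ m, Kxxx (l - m) * f m| :=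
        setIntegral_le_integral (conv_int hf).abs (Eventually.of_forall fun _ => abs_nonneg _)
    _ ≤ ∫ l, ∫ m, Kxxx (l - m) * |f m| := by
        refine integral_mono (conv_int hf).abs (conv_int hfa) fun l => ?_
        refine (abs_integral_le_integral_abs).trans (le_of_eq ?_)
        congr 1
        funext m
        rw [abs_mul, abs_of_nonneg (K_nonneg _)]
    _ = ∫ m, ∫ l, Kxxx (l - m) * |f m| := integral_integral_swap (conv_prod_int hfa)
    _ = ∫ m, |f m| := by
        congr 1
        funext m
        rw [integral_mul_const, integral_sub_right_eq_self (fun x => Kxxx x) m, K_integral, one_mul]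

lemma set_ind (A : Set ℝ) (hA : MeasurableSet A) (l : ℝ) (f : ℝ → ℝ) :
    ∫ m in A, Kxxx (l - m) * f m = ∫ m, Kxxx (l - m) * A.indicator f m := by
  rw [← integral_indicator hA]
  congr 1
  funext m
  by_cases h : m ∈ A <;> simp [h]

open BoundedContinuousFunction in
lemma sol_isBE (q : ℝ) (hq : 0 ≤ q) (G : ℝ →ᵇ ℝ) (h : G + Kop q hq G = xiB) : IsBExxx q G := by
  have h3 : ∀ l, G l + ∫ m in SS q, Kxxx (l - m) * G m = xiXXX l := fun l =>
    congrArg (fun F : ℝ →ᵇ ℝ => F l) h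
  refine ⟨?_, ?_, ?_⟩
  · have e : (G : ℝ → ℝ) = fun l => xiXXX l - ∫ m, Kxxx (l - m) * (SS q).indicator G m := by
      funext l
      rw [← set_ind _ (SS_meas q)]
      linarith [h3 l]
    rw [e]
    exact xi_int.sub (conv_int ((cont_intOn q G.continuous).integrable_indicator (SS_meas q)))
  · exact memLp_top_of_bound G.continuous.aestronglyMeasurable ‖G‖
      (Eventually.of_forall fun m => G.norm_coe_le_norm m)
  · intro l
    rw [ii_eq q hq]
    exact h3 l

open BoundedContinuousFunction in
/-- the dual solution is bounded by one -/
lemma exists_dual (q : ℝ) (hq : 0 ≤ q) : ∃ u : ℝ →ᵇ ℝ, (∀ l, |u l| ≤ 1) ∧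
    ∀ l, u l + ∫ m in SS q, Kxxx (l - m) * u m = 1 := by
  obtain ⟨v, hv⟩ := exists_sol q hq (BoundedContinuousFunction.const ℝ 1 -
    Kop q hq (BoundedContinuousFunction.const ℝ 1))
  have hvv : ∀ l, v l + ∫ m in SS q, Kxxx (l - m) * v m = 1 - ∫ m in SS q, Kxxx (l - m) := by
    intro l
    have := congrArg (fun F : ℝ →ᵇ ℝ => F l) hv
    simpa [Kop_apply] using this
  have hn : ‖v‖ ≤ 1 := by
    by_contra! hcon
    have hlt := cc_lt q
    have : ‖v‖ ≤ ‖v‖ - (1 - cc q) * (‖v‖ - 1) := by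
      refine (BoundedContinuousFunction.norm_le (by nlinarith [cc_nonneg q hq])).mpr fun l => ?_
      have hb := Kop_bound q l ‖v‖ (Eventually.of_forall fun m => v.norm_coe_le_norm m)
      have hk := KS_le q hq l
      have hk0 := KS_nonneg q l
      have e := hvv l
      set k := ∫ m in SS q, Kxxx (l - m)
      rw [abs_le] at hb
      rw [Real.norm_eq_abs, abs_le]
      constructor <;> nlinarith
    nlinarith
  refine ⟨(1 / 2 : ℝ) • (BoundedContinuousFunction.const ℝ 1 + v), fun l => ?_, fun l => ?_⟩
  · have : |v l| ≤ 1 := (v.norm_coe_le_norm l).trans hn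
    rw [abs_le] at this
    simp only [BoundedContinuousFunction.smul_apply, BoundedContinuousFunction.add_apply,
      BoundedContinuousFunction.const_apply, smul_eq_mul]
    rw [abs_le]
    constructor <;> linarith
  · simp only [BoundedContinuousFunction.smul_apply, BoundedContinuousFunction.add_apply,
      BoundedContinuousFunction.const_apply, smul_eq_mul]
    have : ∫ m in SS q, Kxxx (l - m) * (1 / 2 * (1 + v m)) =
        1 / 2 * ((∫ m in SS q, Kxxx (l - m)) + ∫ m in SS q, Kxxx (l - m) * v m) := by
      rw [← integral_add (K_shift_int l).integrableOn (Kmul_intOn q l (cont_intOn q v.continuous)),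
        ← integral_const_mul]
      congr 1
      funext m
      ring
    rw [this]
    linarith [hvv l]

/-- key `L¹` estimate by duality -/
lemma dual_est (q : ℝ) (hq : 0 ≤ q) (d r : ℝ → ℝ) (hd : IntegrableOn d (SS q))
    (h : ∀ l, d l + ∫ m in SS q, Kxxx (l - m) * d m = r l) :
    |∫ l in SS q, d l| ≤ ∫ l in SS q, |r l| := by
  obtain ⟨u, hu1, hu⟩ := exists_dual q hq
  have hKd : IntegrableOn (fun l => ∫ m in SS q, Kxxx (l - m) * d m) (SS q) :=
    cont_intOn q (Kop_cont q hd)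
  have hr : IntegrableOn r (SS q) := by
    have : r = fun l => d l + ∫ m in SS q, Kxxx (l - m) * d m := by
      funext l; rw [h]
    rw [this]
    exact hd.add hKd
  have hub : ∀ {f : ℝ → ℝ}, IntegrableOn f (SS q) → IntegrableOn (fun l => u l * f l) (SS q) := by
    intro f hf
    exact Integrable.bdd_mul (c := 1) hf u.continuous.aestronglyMeasurable
      (Eventually.of_forall hu1)
  have swap : ∫ l in SS q, u l * ∫ m in SS q, Kxxx (l - m) * d m =
      ∫ m in SS q, (∫ l in SS q, Kxxx (m - l) * u l) * d m := by
    have : ∀ l, u l * ∫ m in SS q, Kxxx (l - m) * d m =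
        ∫ m in SS q, u l * (Kxxx (l - m) * d m) := fun l => (integral_const_mul _ _).symm
    simp_rw [this]
    rw [integral_integral_swap]
    · congr 1
      funext m
      rw [← integral_mul_const]
      congr 1
      funext l
      rw [K_even l m]
      ring
    · have hdi : Integrable (fun p : ℝ × ℝ => d p.2) ((volume.restrict (SS q)).prod (volume.restrict (SS q))) := by
        have : IsFiniteMeasure (volume.restrict (SS q)) := ⟨by simp [SS]⟩
        exact Integrable.comp_snd hd _
      have : Integrable (fun p : ℝ × ℝ => (u p.1 * Kxxx (p.1 - p.2)) * d p.2)
          ((volume.restrict (SS q)).prod (volume.restrict (SS q))) := by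
        refine hdi.bdd_mul (c := 1) ?_ ?_
        · refine Continuous.aestronglyMeasurable ?_
          exact (u.continuous.comp continuous_fst).mul
            (K_cont.comp (continuous_fst.sub continuous_snd))
        · filter_upwards with p
          rw [norm_mul, Real.norm_of_nonneg (K_nonneg _)]
          exact mul_le_one₀ (hu1 _) (K_nonneg _) (K_le_one _)
      refine this.congr (Eventually.of_forall fun p => ?_)
      simp [Function.uncurry, mul_assoc]
  have key : ∫ l in SS q, d l = ∫ l in SS q, u l * r l := by
    have e1 : ∫ l in SS q, u l * r l =
        (∫ l in SS q, u l * d l) + ∫ l in SS q, u l * ∫ m in SS q, Kxxx (l - m) * d m := by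
      rw [← integral_add (hub hd) (hub hKd)]
      congr 1
      funext l
      rw [← h]
      ring
    have hi2 : IntegrableOn (fun m => (∫ l in SS q, Kxxx (m - l) * u l) * d m) (SS q) := by
      have : (fun m => (∫ l in SS q, Kxxx (m - l) * u l) * d m) = fun m => d m - u m * d m := by
        funext m
        have := hu m
        rw [show (∫ l in SS q, Kxxx (m - l) * u l) = 1 - u m by linarith]
        ring
      rw [this]
      exact hd.sub (hub hd)
    rw [e1, swap, ← integral_add (hub hd) hi2]
    congr 1
    funext l
    rw [← add_mul, hu, one_mul]
  rw [key, ← Real.norm_eq_abs]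
  refine norm_integral_le_of_norm_le hr.abs (Eventually.of_forall fun l => ?_)
  rw [norm_mul]
  exact mul_le_of_le_one_left (norm_nonneg _) (hu1 l)

lemma compare (q : ℝ) (hq : 0 ≤ q) (g h E : ℝ → ℝ) (A : Set ℝ) (hA : MeasurableSet A)
    (hSA : SS q ⊆ A) (hg : Continuous g) (hh : Integrable h) (hE : Integrable E)
    (h1 : ∀ l, g l + ∫ m in SS q, Kxxx (l - m) * g m = xiXXX l)
    (h2 : ∀ l, h l + ∫ m in A, Kxxx (l - m) * h m = xiXXX l + E l) :
    |(∫ l in SS q, g l) - ∫ l in A, h l| ≤ 2 * (∫ l in A \ SS q, |h l|) + ∫ l, |E l| := by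
  have hB : MeasurableSet (A \ SS q) := hA.diff (SS_meas q)
  have hgi := cont_intOn q hg
  have split : ∀ f : ℝ → ℝ, Integrable f →
      ∫ l in A, f l = (∫ l in SS q, f l) + ∫ l in A \ SS q, f l := by
    intro f hf
    rw [← setIntegral_union Set.disjoint_sdiff_right hB hf.integrableOn hf.integrableOn,
      Set.union_sdiff_cancel hSA]
  have hind : Integrable ((A \ SS q).indicator h) := hh.indicator hB
  have hd := dual_est q hq (fun l => g l - h l)
    (fun l => (∫ m in A \ SS q, Kxxx (l - m) * h m) - E l) (hgi.sub hh.integrableOn) (fun l => by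
      have e : ∫ m in SS q, Kxxx (l - m) * (g m - h m) =
          (∫ m in SS q, Kxxx (l - m) * g m) - ∫ m in SS q, Kxxx (l - m) * h m := by
        rw [← integral_sub (Kmul_intOn q l hgi) (Kmul_intOn q l hh.integrableOn)]
        congr 1
        funext m
        ring
      have e2 := split _ (Kmul_int l hh)
      rw [e]
      linarith [h1 l, h2 l])
  rw [integral_sub hgi hh.integrableOn] at hd
  have hr : ∫ l in SS q, |(∫ m in A \ SS q, Kxxx (l - m) * h m) - E l| ≤
      (∫ l in A \ SS q, |h l|) + ∫ l, |E l| := by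
    have i1 : Integrable (fun l => |∫ m in A \ SS q, Kxxx (l - m) * h m|) := by
      simp_rw [set_ind _ hB]
      exact (conv_int hind).abs
    calc _ ≤ ∫ l in SS q, (|∫ m in A \ SS q, Kxxx (l - m) * h m| + |E l|) := by
          refine integral_mono_of_nonneg (Eventually.of_forall fun _ => abs_nonneg _)
            (i1.integrableOn.add hE.abs.integrableOn) (Eventually.of_forall fun l => ?_)
          exact abs_sub _ _
      _ = (∫ l in SS q, |∫ m in A \ SS q, Kxxx (l - m) * h m|) + ∫ l in SS q, |E l| :=
          integral_add i1.integrableOn hE.abs.integrableOn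
      _ ≤ _ := by
          refine add_le_add ?_ (setIntegral_le_integral hE.abs
            (Eventually.of_forall fun _ => abs_nonneg _))
          simp_rw [set_ind _ hB]
          refine (conv_L1 (SS q) hind).trans (le_of_eq ?_)
          rw [← integral_indicator hB]
          congr 1
          funext m
          by_cases hm : m ∈ A \ SS q <;> simp [hm]
  have hs := split h hh
  have habs : |∫ l in A \ SS q, h l| ≤ ∫ l in A \ SS q, |h l| := abs_integral_le_integral_abs
  have hd' := hd.trans hr
  rw [abs_le] at habs hd' ⊢
  constructor <;> linarith

/-- approximate solutions on the whole line -/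
lemma approx (N : ℕ) : ∃ p : ℝ → ℝ, Integrable p ∧
    (∀ l, p l + ∫ m, Kxxx (l - m) * p m = xiXXX l - (-1) ^ N * PP (N + 1 / 2) l) ∧
    ∫ l, p l = (1 - (-1) ^ N) / 2 := by
  induction N with
  | zero => exact ⟨fun _ => 0, integrable_zero _ _ _, fun l => by simp [xi_eq], by simp⟩
  | succ N ih =>
    obtain ⟨p, hp, h1, h2⟩ := ih
    have hN : (0 : ℝ) < N + 1 / 2 := by positivity
    have hN1 : (N + 1 / 2 : ℝ) ≠ 1 := by
      intro h
      have : ((2 * N + 1 : ℕ) : ℝ) = ((2 : ℕ) : ℝ) := by push_cast; linarith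
      have := Nat.cast_injective this
      omega
    refine ⟨fun l => p l + (-1) ^ N * PP (N + 1 / 2) l, hp.add ((PP_int _ hN).const_mul _), ?_, ?_⟩
    · intro l
      have e : ∫ m, Kxxx (l - m) * (p m + (-1) ^ N * PP (N + 1 / 2) m) =
          (∫ m, Kxxx (l - m) * p m) + (-1) ^ N * PP (N + 1 / 2 + 1) l := by
        rw [← K_conv_PP _ hN hN1, ← integral_const_mul,
          ← integral_add (Kmul_int l hp) ((Kmul_int l (PP_int _ hN)).const_mul _)]
        congr 1
        funext m
        ring
      rw [e]
      have e2 : ((N + 1 : ℕ) : ℝ) + 1 / 2 = N + 1 / 2 + 1 := by push_cast; ring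
      rw [e2, pow_succ]
      linarith [h1 l]
    · rw [integral_add hp ((PP_int _ hN).const_mul _), integral_const_mul, PP_integral _ hN, h2,
        pow_succ]
      ring

lemma approx2 (N : ℕ) : ∃ p E : ℝ → ℝ, Integrable p ∧ Integrable E ∧
    (∀ l, p l + ∫ m, Kxxx (l - m) * p m = xiXXX l + E l) ∧
    ∫ l, p l = 1 / 2 ∧ ∫ l, |E l| ≤ (N + 1 / 2 : ℝ)⁻¹ := by
  obtain ⟨p, hp, h1, h2⟩ := approx N
  obtain ⟨p', hp', h1', h2'⟩ := approx (N + 1)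
  have hN : (0 : ℝ) < N + 1 / 2 := by positivity
  have e2 : ((N + 1 : ℕ) : ℝ) + 1 / 2 = N + 1 / 2 + 1 := by push_cast; ring
  rw [e2] at h1'
  refine ⟨fun l => (p l + p' l) / 2,
    fun l => -((-1) ^ N / 2 * (PP (N + 1 / 2) l - PP (N + 1 / 2 + 1) l)), (hp.add hp').div_const 2,
    (((PP_int _ hN).sub (PP_int _ (by positivity))).const_mul _).neg, ?_, ?_, ?_⟩
  · intro l
    have e : ∫ m, Kxxx (l - m) * ((p m + p' m) / 2) =
        ((∫ m, Kxxx (l - m) * p m) + (∫ m, Kxxx (l - m) * p' m)) / 2 := by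
      rw [← integral_add (Kmul_int l hp) (Kmul_int l hp'), ← integral_div]
      congr 1
      funext m
      ring
    rw [e]
    have := h1 l
    have h3 := h1' l
    rw [pow_succ] at h3
    linarith
  · rw [integral_div, integral_add hp hp', h2, h2', pow_succ]
    ring
  · calc _ ≤ ∫ l, (N + 1 / 2 : ℝ)⁻¹ * PP (N + 1 / 2) l := by
          refine integral_mono_of_nonneg (Eventually.of_forall fun _ => abs_nonneg _)
            ((PP_int _ hN).const_mul _) (Eventually.of_forall fun l => ?_)
          have := PP_diff_le _ hN l
          change |_| ≤ _
          rw [abs_neg, abs_mul, abs_div, abs_pow, abs_neg, abs_one, one_pow, abs_two]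
          have := abs_nonneg (PP (N + 1 / 2) l - PP (N + 1 / 2 + 1) l)
          linarith
      _ = _ := by rw [integral_const_mul, PP_integral _ hN, mul_one]

open BoundedContinuousFunction in
/-- the chosen solution -/
def rho (q : ℝ) (hq : 0 ≤ q) : ℝ →ᵇ ℝ := (exists_sol q hq xiB).choose

lemma rho_spec (q : ℝ) (hq : 0 ≤ q) : rho q hq + Kop q hq (rho q hq) = xiB :=
  (exists_sol q hq xiB).choose_spec

lemma rho_eq (q : ℝ) (hq : 0 ≤ q) (l : ℝ) :
    rho q hq l + ∫ m in SS q, Kxxx (l - m) * rho q hq m = xiXXX l :=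
  congrArg (fun F : BoundedContinuousFunction ℝ ℝ => F l) (rho_spec q hq)

lemma rho_int (q : ℝ) (hq : 0 ≤ q) : Integrable (rho q hq) := (sol_isBE q hq _ (rho_spec q hq)).1

/-- total mass -/
def FF (q : ℝ) : ℝ := ∫ t in SS |q|, rho |q| (abs_nonneg q) t

lemma FF_eq (q : ℝ) (hq : 0 ≤ q) : FF q = ∫ t in SS q, rho q hq t := by
  unfold FF
  have key : ∀ (a : ℝ) (ha : 0 ≤ a), a = q →
      ∫ t in SS a, rho a ha t = ∫ t in SS q, rho q hq t := by
    rintro a ha rfl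
    rfl
  exact key _ _ (abs_of_nonneg hq)

lemma FF_lip (Q p q : ℝ) (hp : 0 ≤ p) (hpq : p ≤ q) (hqQ : q ≤ Q) :
    |FF p - FF q| ≤ 4 / (1 - cc Q) * (q - p) := by
  have hq := hp.trans hpq
  have hSS : SS p ⊆ SS q := Set.Ioc_subset_Ioc (by linarith) hpq
  have h := compare p hp (rho p hp) (rho q hq) (fun _ => 0) (SS q) (SS_meas q) hSS
    (rho p hp).continuous (rho_int q hq) (integrable_zero _ _ _) (rho_eq p hp)
    (fun l => by rw [rho_eq q hq l, add_zero])
  rw [FF_eq p hp, FF_eq q hq]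
  refine h.trans ?_
  have hcQ := cc_lt Q
  have hn : ‖rho q hq‖ ≤ 1 / (1 - cc Q) := by
    refine (sol_norm q hq _ _ (rho_spec q hq)).trans ?_
    have := cc_mono hqQ
    exact div_le_div₀ zero_le_one xiB_norm (by linarith) (by linarith)
  have hvol : volume.real (SS q \ SS p) = 2 * (q - p) := by
    rw [measureReal_sdiff hSS (SS_meas p) (by simp [SS])]
    simp only [SS, Real.volume_real_Ioc]
    rw [max_eq_left (by linarith), max_eq_left (by linarith)]
    ring
  have hb : ∫ l in SS q \ SS p, |rho q hq l| ≤ 1 / (1 - cc Q) * (2 * (q - p)) := by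
    have := norm_setIntegral_le_of_norm_le_const (μ := volume) (s := SS q \ SS p)
      (f := fun l => |rho q hq l|) (C := 1 / (1 - cc Q))
      ((measure_mono Set.sdiff_subset).trans_lt (by simp [SS])) (fun l _ => by
        rw [Real.norm_eq_abs, abs_abs]
        exact ((rho q hq).norm_coe_le_norm l).trans hn)
    rw [hvol] at this
    exact (le_abs_self _).trans this
  have e : 4 / (1 - cc Q) * (q - p) = 2 * (1 / (1 - cc Q) * (2 * (q - p))) := by ring
  rw [e]
  simpa using hb

lemma FF_cont (Q : ℝ) : ContinuousOn FF (Set.Icc 0 Q) := by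
  have hcQ := cc_lt Q
  have hpos : 0 ≤ 4 / (1 - cc Q) := div_nonneg (by norm_num) (by linarith)
  have : LipschitzOnWith ⟨4 / (1 - cc Q), hpos⟩ FF (Set.Icc 0 Q) := by
    refine LipschitzOnWith.of_dist_le_mul fun x hx y hy => ?_
    rw [Real.dist_eq, Real.dist_eq]
    change _ ≤ 4 / (1 - cc Q) * _
    rcases le_total x y with h | h
    · rw [abs_sub_comm x y, abs_of_nonneg (sub_nonneg.mpr h)]
      exact FF_lip Q x y hx.1 h hy.2
    · rw [abs_sub_comm (FF x), abs_of_nonneg (sub_nonneg.mpr h)]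
      exact FF_lip Q y x hy.1 h hx.2
  exact this.continuousOn

lemma FF_large (m : ℝ) (hm : m < 1 / 2) : ∃ q, 0 ≤ q ∧ m ≤ FF q := by
  set ε := (1 / 2 - m) / 2 with hε
  have hεp : 0 < ε := by rw [hε]; linarith
  obtain ⟨N, hN⟩ := exists_nat_gt (ε⁻¹)
  have hN2 : (N + 1 / 2 : ℝ)⁻¹ ≤ ε := by
    rw [inv_le_comm₀ (by positivity) hεp]
    linarith
  obtain ⟨p, E, hp, hE, h1, h2, h3⟩ := approx2 N
  have ht := intervalIntegral_tendsto_integral (μ := volume) hp.abs tendsto_neg_atTop_atBot tendsto_id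
  have hev := (ht.eventually (lt_mem_nhds (show (∫ x, |p x|) - ε / 2 < ∫ x, |p x| by linarith))).and
    (eventually_ge_atTop (0 : ℝ))
  obtain ⟨q, hq1, hq⟩ := hev.exists
  refine ⟨q, hq, ?_⟩
  have hc := compare q hq (rho q hq) p E Set.univ MeasurableSet.univ (Set.subset_univ _)
    (rho q hq).continuous hp hE (rho_eq q hq) (fun l => by rw [Measure.restrict_univ]; exact h1 l)
  rw [Measure.restrict_univ, h2, ← FF_eq, ← Set.compl_eq_univ_sdiff] at hc
  have hsum := integral_add_compl (SS_meas q) hp.abs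
  simp only [id] at hq1
  rw [ii_eq q hq] at hq1
  rw [abs_le] at hc
  have := hc.1
  linarith

/-- **Existence and uniqueness for the continuum Bethe equation at `Δ = -1`**
(Proposition C.1): for every `q ∈ [0,∞)` the equation has a unique solution
`ρ(·|q) ∈ L¹(ℝ) ∩ L^∞(ℝ)`, and for every `m ∈ [0,1/2)` there exists `q ∈ [0,∞)`
with `∫_{-q}^{q} ρ(λ|q)dλ = m`. -/
theorem continuum_bethe_delta_minus_one :
    (∀ q : ℝ, 0 ≤ q → ∃! g : ℝ → ℝ, IsBExxx q g) ∧
    ∀ m : ℝ, 0 ≤ m → m < 1 / 2 →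
      ∃ q : ℝ, 0 ≤ q ∧ ∀ g : ℝ → ℝ, IsBExxx q g → (∫ t in (-q)..q, g t) = m := by
  have huniq : ∀ (q : ℝ) (hq : 0 ≤ q) (g : ℝ → ℝ), IsBExxx q g → g = rho q hq := by
    intro q hq g hg
    obtain ⟨G, hG, hG2⟩ := isBE_to q hq g hg
    rw [← hG, sol_unique q hq G (rho q hq) xiB hG2 (rho_spec q hq)]
  refine ⟨fun q hq => ⟨rho q hq, sol_isBE q hq _ (rho_spec q hq), huniq q hq⟩, fun m hm hm2 => ?_⟩
  obtain ⟨Q, hQ, hQm⟩ := FF_large m hm2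
  have h0 : FF 0 = 0 := by
    rw [FF_eq 0 le_rfl]
    simp [SS]
  obtain ⟨q, hq, hqm⟩ := intermediate_value_Icc hQ (FF_cont Q) ⟨h0.trans_le hm, hQm⟩
  refine ⟨q, hq.1, fun g hg => ?_⟩
  rw [huniq q hq.1 g hg, ii_eq q hq.1, ← FF_eq, hqm]

end BetheSix
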